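/- Let (c₁,B₁),…,(cₘ,Bₘ) be a Brascamp–Lieb datum on ℝⁿ with Σᵢ cᵢ nᵢ = n, and suppose there exists a positive definite n×n matrix A satisfying A⁻¹ = Σᵢ cᵢ Bᵢ* (Bᵢ A Bᵢ*)⁻¹ Bᵢ. Then for every collection of nonnegative integrable functions fᵢ : ℝ^{nᵢ} → ℝ one has ∫_{ℝⁿ} ∏ᵢ (fᵢ(Bᵢx))^{cᵢ} dx ≤ C ∏ᵢ (∫_{ℝ^{nᵢ}} fᵢ dx)^{cᵢ}, where C = (det(A) / ∏ᵢ det(Bᵢ A Bᵢ*)^{cᵢ})^{1/2}. -/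

import Mathlib

open MeasureTheory Matrix

/-!
Write `A = S Sᵀ` and `Bᵢ A Bᵢᵀ = Qᵢ Qᵢᵀ`. The linear changes of variables `S` and `Qᵢ` reduce the
theorem to the geometric case `Bᵢ Bᵢ* = 1`, `∑ cᵢ Bᵢ* Bᵢ = 1`, in which the constant is `1`. There
the Gaussian density `ρ` satisfies `∏ ρ(Bᵢ x) ^ cᵢ = ρ(x)`, so Lebesgue measure may be replaced by
the Gaussian measure. For smooth `Gᵢ = fᵢ ∘ Bᵢ ≥ ε > 0` and independent Gaussians `x`, `z`, the
function `θ ↦ E_x ∏ (E_z Gᵢ(sin θ x + cos θ z)) ^ cᵢ` moves from `∏ (E Gᵢ) ^ cᵢ` at `θ = 0` to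
`E ∏ Gᵢ ^ cᵢ` at `θ = π / 2`. By Gaussian integration by parts its derivative is
`sin θ cos θ E_x [Φ (|∑ cᵢ ∇ log Wᵢ|² - ∑ cᵢ |∇ log Wᵢ|²)]` at `sin θ x`, where
`Wᵢ(y) = E_z Gᵢ(y + cos θ z)` and `Φ = ∏ Wᵢ ^ cᵢ`. As `∇ log Wᵢ` lies in the range of `Bᵢ*`, the
geometric condition makes the bracket nonpositive.
-/

namespace BrascampLieb

set_option maxSynthPendingDepth 3

open ProbabilityTheory Filter Topology
open scoped RealInnerProductSpace

section Gaussian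

variable {E F : Type*} [NormedAddCommGroup E] [InnerProductSpace ℝ E] [NormedAddCommGroup F]
  [NormedSpace ℝ F]

/-- The density of the standard Gaussian measure with respect to Lebesgue measure. -/
noncomputable def gaussianDensity (x : E) : ℝ :=
  (2 * Real.pi) ^ (-(Module.finrank ℝ E / 2 : ℝ)) * Real.exp (-‖x‖ ^ 2 / 2)

lemma gaussianDensity_pos (x : E) : 0 < gaussianDensity x := by
  unfold gaussianDensity; positivity

lemma contDiff_gaussianDensity : ContDiff ℝ 1 (gaussianDensity : E → ℝ) := by
  unfold gaussianDensity
  exact contDiff_const.mul ((((contDiff_norm_sq ℝ).neg).div_const 2).exp)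

lemma fderiv_gaussianDensity (x v : E) :
    fderiv ℝ gaussianDensity x v = -(⟪v, x⟫ * gaussianDensity x) := by
  have h := ((((hasStrictFDerivAt_norm_sq x).hasFDerivAt.neg).mul_const (2 : ℝ)⁻¹).exp).const_mul
    ((2 * Real.pi) ^ (-(Module.finrank ℝ E / 2 : ℝ)))
  have h' : HasFDerivAt (gaussianDensity : E → ℝ) _ x := h
  rw [h'.fderiv]
  simp only [div_eq_mul_inv, Pi.neg_apply, neg_mul, smul_neg, _root_.neg_apply, _root_.smul_apply,
    coe_innerSL_apply, nsmul_eq_mul, Nat.cast_ofNat, smul_eq_mul, ne_eq, OfNat.ofNat_ne_zero,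
    not_false_eq_true, inv_mul_cancel_left₀, real_inner_comm, gaussianDensity, neg_inj]
  ring

variable [FiniteDimensional ℝ E] [MeasurableSpace E] [BorelSpace E]

lemma integral_cexp_inner_mul_gaussianDensity (t : E) :
    ∫ x : E, (gaussianDensity x : ℂ) * Complex.exp (⟪x, t⟫ * Complex.I) =
      Complex.exp (-‖t‖ ^ 2 / 2) := by
  have h := GaussianFourier.integral_cexp_neg_mul_sq_norm_add (V := E) (b := 1 / 2) (by simp)
    Complex.I t
  have hpi : ((2 * Real.pi : ℝ) : ℂ) ^ (-(Module.finrank ℝ E / 2 : ℂ)) *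
      (Real.pi / (1 / 2) : ℂ) ^ (Module.finrank ℝ E / 2 : ℂ) = 1 := by
    rw [show (Real.pi / (1 / 2) : ℂ) = ((2 * Real.pi : ℝ) : ℂ) by push_cast; ring,
      ← Complex.cpow_add _ _ (by exact_mod_cast Real.two_pi_pos.ne'), neg_add_cancel,
      Complex.cpow_zero]
  calc ∫ x : E, (gaussianDensity x : ℂ) * Complex.exp (⟪x, t⟫ * Complex.I)
      = ∫ x : E, ((2 * Real.pi : ℝ) : ℂ) ^ (-(Module.finrank ℝ E / 2 : ℂ)) *
          Complex.exp (-(1 / 2) * ‖x‖ ^ 2 + Complex.I * ⟪t, x⟫) := by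
        congr! 2 with x
        rw [gaussianDensity, Complex.ofReal_mul, Complex.ofReal_cpow Real.two_pi_pos.le,
          Complex.ofReal_exp, mul_assoc, ← Complex.exp_add, real_inner_comm]
        push_cast
        ring_nf
    _ = Complex.exp (-‖t‖ ^ 2 / 2) := by
        rw [integral_const_mul, h, ← mul_assoc, hpi, one_mul, Complex.I_sq]
        ring_nf

lemma integrable_gaussianDensity : Integrable (gaussianDensity : E → ℝ) := by
  have h := GaussianFourier.integrable_cexp_neg_mul_sq_norm_add (V := E) (b := 1 / 2) (by simp) 0 0
  refine (h.norm.const_mul ((2 * Real.pi) ^ (-(Module.finrank ℝ E / 2 : ℝ)))).congr ?_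
  refine .of_forall fun x => ?_
  simp only [gaussianDensity, Complex.norm_exp]
  congr 2
  simp only [← Complex.ofReal_pow, inner_zero_left, Complex.ofReal_zero, mul_zero, add_zero,
    neg_mul, Complex.neg_re, Complex.re_mul_ofReal, one_div, Complex.inv_re, Complex.re_ofNat,
    Complex.normSq_ofNat, div_self_mul_self']
  ring

lemma stdGaussian_eq_withDensity :
    stdGaussian E = volume.withDensity fun x => ENNReal.ofReal (gaussianDensity x) := by
  have : IsFiniteMeasure (volume.withDensity fun x : E => ENNReal.ofReal (gaussianDensity x)) :=
    isFiniteMeasure_withDensity_ofReal integrable_gaussianDensity.2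
  refine Measure.ext_of_charFun (funext fun t => ?_)
  rw [charFun_stdGaussian, charFun_apply, integral_withDensity_eq_integral_toReal_smul₀ ?_ ?_]
  · simp only [ENNReal.toReal_ofReal (gaussianDensity_pos _).le, Complex.real_smul,
      integral_cexp_inner_mul_gaussianDensity]
  · exact contDiff_gaussianDensity.continuous.measurable.ennreal_ofReal.aemeasurable
  · simp

lemma integrable_stdGaussian_iff {f : E → F} :
    Integrable f (stdGaussian E) ↔ Integrable fun x => gaussianDensity x • f x := by
  rw [stdGaussian_eq_withDensity, integrable_withDensity_iff_integrable_smul₀' ?_ ?_]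
  · simp only [ENNReal.toReal_ofReal (gaussianDensity_pos _).le]
  · exact contDiff_gaussianDensity.continuous.measurable.ennreal_ofReal.aemeasurable
  · simp

lemma integral_stdGaussian (f : E → F) :
    ∫ x, f x ∂stdGaussian E = ∫ x, gaussianDensity x • f x := by
  rw [stdGaussian_eq_withDensity, integral_withDensity_eq_integral_toReal_smul₀ ?_ ?_]
  · simp only [ENNReal.toReal_ofReal (gaussianDensity_pos _).le]
  · exact contDiff_gaussianDensity.continuous.measurable.ennreal_ofReal.aemeasurable
  · simp

lemma measurePreserving_stdGaussian_of_comp_adjoint_eq_id {V : Type*} [NormedAddCommGroup V]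
    [InnerProductSpace ℝ V] [FiniteDimensional ℝ V] [MeasurableSpace V] [BorelSpace V]
    {B : E →L[ℝ] V} (hB : B ∘L B.adjoint = .id ℝ V) :
    MeasurePreserving B (stdGaussian E) (stdGaussian V) := by
  have := Measure.isProbabilityMeasure_map (μ := stdGaussian E) B.continuous.measurable.aemeasurable
  refine ⟨B.continuous.measurable, Measure.ext_of_charFun (funext fun t => ?_)⟩
  have hnorm : ‖B.adjoint t‖ ^ 2 = ‖t‖ ^ 2 := by
    rw [← real_inner_self_eq_norm_sq, ← real_inner_self_eq_norm_sq, B.adjoint_inner_left,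
      ← B.comp_apply, hB, ContinuousLinearMap.id_apply]
  rw [charFun_stdGaussian, charFun_apply, integral_map (by fun_prop) (by fun_prop),
    ← Complex.ofReal_pow ‖t‖, ← hnorm, Complex.ofReal_pow, ← charFun_stdGaussian, charFun_apply]
  simp only [B.adjoint_inner_right]

end Gaussian

section BoundedC1

variable {E F G : Type*} [NormedAddCommGroup E] [NormedSpace ℝ E]
  [NormedAddCommGroup F] [NormedSpace ℝ F] [NormedAddCommGroup G] [NormedSpace ℝ G]

lemma hasFDerivAt_add_smul (y x : E) (s : ℝ) :
    HasFDerivAt (fun x : E => y + s • x) (s • .id ℝ E) x :=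
  ((hasFDerivAt_id x).const_smul s).const_add y

/-- The class `C¹_b` of continuously differentiable functions that are bounded together with their
derivative; every function on which the Gaussian calculus below is performed lies in it. -/
structure BoundedC1 (f : E → F) : Prop where
  contDiff : ContDiff ℝ 1 f
  bounded : ∃ C, ∀ x, ‖f x‖ ≤ C
  fderiv_bounded : ∃ C, ∀ x, ‖fderiv ℝ f x‖ ≤ C

namespace BoundedC1

variable {f : E → F}

lemma continuous (hf : BoundedC1 f) : Continuous f := hf.contDiff.continuous

lemma continuous_fderiv (hf : BoundedC1 f) : Continuous (fderiv ℝ f) :=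
  hf.contDiff.continuous_fderiv one_ne_zero

lemma hasFDerivAt (hf : BoundedC1 f) (x : E) : HasFDerivAt f (fderiv ℝ f x) x :=
  (hf.contDiff.differentiable one_ne_zero x).hasFDerivAt

lemma integrable [SecondCountableTopology E] [MeasurableSpace E] [OpensMeasurableSpace E]
    (hf : BoundedC1 f) (μ : Measure E) [IsFiniteMeasure μ] : Integrable f μ := by
  obtain ⟨C, hC⟩ := hf.bounded
  exact .of_bound hf.continuous.aestronglyMeasurable C (.of_forall hC)

lemma integrable_fderiv_comp {X : Type*} [TopologicalSpace X] [SecondCountableTopology X]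
    [MeasurableSpace X] [OpensMeasurableSpace X] (hf : BoundedC1 f) {φ : X → E} (hφ : Continuous φ)
    (μ : Measure X) [IsFiniteMeasure μ] : Integrable (fun x => fderiv ℝ f (φ x)) μ := by
  obtain ⟨C, hC⟩ := hf.fderiv_bounded
  exact .of_bound (hf.continuous_fderiv.comp hφ).aestronglyMeasurable C (.of_forall fun x => hC _)

lemma of_hasCompactSupport (hf : ContDiff ℝ 1 f) (hsupp : HasCompactSupport f) : BoundedC1 f where
  contDiff := hf
  bounded := hf.continuous.bounded_above_of_compact_support hsupp
  fderiv_bounded := (hf.continuous_fderiv one_ne_zero).bounded_above_of_compact_support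
    (hsupp.fderiv ℝ)

lemma comp_contDiff {φ : G → E} (hf : BoundedC1 f) (hφ : ContDiff ℝ 1 φ)
    (hφ' : ∃ C, ∀ x, ‖fderiv ℝ φ x‖ ≤ C) : BoundedC1 fun x => f (φ x) := by
  obtain ⟨C, hC⟩ := hf.bounded
  obtain ⟨D, hD⟩ := hf.fderiv_bounded
  obtain ⟨D', hD'⟩ := hφ'
  refine ⟨hf.contDiff.comp hφ, ⟨C, fun x => hC _⟩, D * D', fun x => ?_⟩
  rw [fderiv_fun_comp x (hf.hasFDerivAt _).differentiableAt (hφ.differentiable one_ne_zero x)]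
  exact (ContinuousLinearMap.opNorm_comp_le _ _).trans
    (mul_le_mul (hD _) (hD' _) (norm_nonneg _) ((norm_nonneg _).trans (hD (φ x))))

lemma comp_clm (hf : BoundedC1 f) (L : G →L[ℝ] E) : BoundedC1 fun x => f (L x) :=
  hf.comp_contDiff L.contDiff ⟨‖L‖, fun x => by rw [L.fderiv]⟩

lemma fderiv_comp_clm (hf : BoundedC1 f) (L : G →L[ℝ] E) (x : G) :
    fderiv ℝ (fun x => f (L x)) x = fderiv ℝ f (L x) ∘L L :=
  ((hf.hasFDerivAt _).comp x L.hasFDerivAt).fderiv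

lemma comp_add_smul (hf : BoundedC1 f) (y : E) (s : ℝ) : BoundedC1 fun x => f (y + s • x) :=
  hf.comp_contDiff (by fun_prop) ⟨_, fun x => (congrArg _ (hasFDerivAt_add_smul y x s).fderiv).le⟩

lemma contDiffOn_comp [ProperSpace F] {h : F → G} {K U : Set F} (hK : IsClosed K) (hU : IsOpen U)
    (hKU : K ⊆ U) (hh : ContDiffOn ℝ 1 h U) (hf : BoundedC1 f) (hfK : ∀ x, f x ∈ K) :
    BoundedC1 fun x => h (f x) := by
  obtain ⟨C, hC⟩ := hf.bounded
  obtain ⟨D, hD⟩ := hf.fderiv_bounded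
  have hcompact : IsCompact (Metric.closedBall 0 C ∩ K) :=
    (isCompact_closedBall 0 C).inter_right hK
  have hmem (x : E) : f x ∈ Metric.closedBall 0 C ∩ K :=
    ⟨mem_closedBall_zero_iff.2 (hC x), hfK x⟩
  have hKU' : Metric.closedBall 0 C ∩ K ⊆ U := Set.inter_subset_right.trans hKU
  obtain ⟨M, hM⟩ := hcompact.exists_bound_of_continuousOn (hh.continuousOn.mono hKU')
  obtain ⟨M', hM'⟩ := hcompact.exists_bound_of_continuousOn
    ((hh.continuousOn_fderiv_of_isOpen hU le_rfl).mono hKU')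
  refine ⟨hh.comp_contDiff hf.contDiff fun x => hKU (hfK x), ⟨M, fun x => hM _ (hmem x)⟩,
    M' * D, fun x => ?_⟩
  have hhx : DifferentiableAt ℝ h (f x) :=
    (hh.contDiffAt (hU.mem_nhds (hKU (hfK x)))).differentiableAt one_ne_zero
  rw [fderiv_fun_comp x hhx (hf.hasFDerivAt x).differentiableAt]
  exact (ContinuousLinearMap.opNorm_comp_le _ _).trans
    (mul_le_mul (hM' _ (hmem x)) (hD x) (norm_nonneg _) ((norm_nonneg _).trans (hM' _ (hmem x))))

lemma contDiff_comp [ProperSpace F] {h : F → G} (hh : ContDiff ℝ 1 h) (hf : BoundedC1 f) :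
    BoundedC1 fun x => h (f x) :=
  hf.contDiffOn_comp isClosed_univ isOpen_univ subset_rfl hh.contDiffOn fun _ => trivial

lemma prodMk {g : E → G} (hf : BoundedC1 f) (hg : BoundedC1 g) :
    BoundedC1 fun x => (f x, g x) := by
  obtain ⟨C, hC⟩ := hf.bounded
  obtain ⟨C', hC'⟩ := hg.bounded
  obtain ⟨D, hD⟩ := hf.fderiv_bounded
  obtain ⟨D', hD'⟩ := hg.fderiv_bounded
  refine ⟨hf.contDiff.prodMk hg.contDiff, ⟨max C C', fun x => max_le_max (hC x) (hC' x)⟩,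
    max D D', fun x => ?_⟩
  rw [((hf.hasFDerivAt x).prodMk (hg.hasFDerivAt x)).fderiv, ContinuousLinearMap.opNorm_prod]
  exact max_le_max (hD x) (hD' x)

lemma pi {ι : Type*} [Fintype ι] {f : ι → E → F} (hf : ∀ i, BoundedC1 (f i)) :
    BoundedC1 fun x i => f i x := by
  choose C hC using fun i => (hf i).bounded
  choose D hD using fun i => (hf i).fderiv_bounded
  refine ⟨contDiff_pi.2 fun i => (hf i).contDiff, ⟨∑ i, |C i|, fun x => ?_⟩, ∑ i, |D i|,
    fun x => ?_⟩
  · refine (pi_norm_le_iff_of_nonneg (by positivity)).2 fun i => ?_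
    exact ((hC i x).trans (le_abs_self _)).trans
      (Finset.single_le_sum (fun j _ => abs_nonneg (C j)) (Finset.mem_univ i))
  · rw [(hasFDerivAt_pi.2 fun i => (hf i).hasFDerivAt x).fderiv]
    refine ContinuousLinearMap.norm_pi_le_of_le (fun i => ?_) (by positivity)
    exact ((hD i x).trans (le_abs_self _)).trans
      (Finset.single_le_sum (fun j _ => abs_nonneg (D j)) (Finset.mem_univ i))

lemma smul [ProperSpace G] {f : E → ℝ} {g : E → G} (hf : BoundedC1 f)
    (hg : BoundedC1 g) : BoundedC1 fun x => f x • g x :=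
  (hf.prodMk hg).contDiff_comp (h := fun p => p.1 • p.2) (by fun_prop)

lemma sum [ProperSpace F] {ι : Type*} [Fintype ι] {f : ι → E → F} (hf : ∀ i, BoundedC1 (f i)) :
    BoundedC1 fun x => ∑ i, f i x :=
  (pi hf).contDiff_comp (h := fun p : ι → F => ∑ i, p i) (by fun_prop)

lemma inv {ε : ℝ} (hε : 0 < ε) {w : E → ℝ} (hw : BoundedC1 w) (hwε : ∀ x, ε ≤ w x) :
    BoundedC1 fun x => (w x)⁻¹ :=
  hw.contDiffOn_comp isClosed_Ici isOpen_Ioi (Set.Ici_subset_Ioi.2 hε)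
    (fun _ h => (contDiffAt_inv ℝ (ne_of_gt h)).contDiffWithinAt) hwε

lemma prod_rpow {ι : Type*} [Fintype ι] {w : ι → E → ℝ} {ε : ℝ}
    (c : ι → ℝ) (hε : 0 < ε) (hw : ∀ i, BoundedC1 (w i))
    (hwε : ∀ i x, ε ≤ w i x) : BoundedC1 fun x => ∏ i, w i x ^ c i := by
  refine (pi hw).contDiffOn_comp (K := Set.pi .univ fun _ => .Ici ε)
    (U := Set.pi .univ fun _ => .Ioi 0) (h := fun p => ∏ i, p i ^ c i)
    (isClosed_set_pi fun _ _ => isClosed_Ici) (isOpen_set_pi Set.finite_univ fun _ _ => isOpen_Ioi)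
    (Set.pi_mono fun _ _ => Set.Ici_subset_Ioi.2 hε) ?_ fun x i _ => hwε i x
  exact contDiffOn_prod fun i _ => (contDiff_apply ℝ ℝ i).contDiffOn.rpow_const_of_ne
    fun p hp => (hp i trivial).ne'

end BoundedC1

end BoundedC1

section BilinTrace

variable {E : Type*} [NormedAddCommGroup E] [InnerProductSpace ℝ E] [FiniteDimensional ℝ E]

variable (E) in
/-- The trace of a bilinear form on `E`, computed in an orthonormal basis. For
`b = fderiv ℝ (fderiv ℝ f) x` it is the Laplacian of `f` at `x`. -/
noncomputable def bilinTrace : (E →L[ℝ] E →L[ℝ] ℝ) →L[ℝ] ℝ :=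
  ∑ j, (ContinuousLinearMap.apply ℝ ℝ (stdOrthonormalBasis ℝ E j)).comp
    (ContinuousLinearMap.apply ℝ _ (stdOrthonormalBasis ℝ E j))

lemma bilinTrace_apply (b : E →L[ℝ] E →L[ℝ] ℝ) :
    bilinTrace E b = ∑ j, b (stdOrthonormalBasis ℝ E j) (stdOrthonormalBasis ℝ E j) := by
  simp [bilinTrace]

lemma bilinTrace_smulRight (l : E →L[ℝ] ℝ) : bilinTrace E (l.smulRight l) = ‖l‖ ^ 2 := by
  simp [bilinTrace_apply, (stdOrthonormalBasis ℝ E).norm_dual l, sq]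

end BilinTrace

section Stein

variable {E F : Type*} [NormedAddCommGroup E] [InnerProductSpace ℝ E] [FiniteDimensional ℝ E]
  [MeasurableSpace E] [BorelSpace E] [NormedAddCommGroup F]

lemma integrable_one_add_norm_stdGaussian (C : ℝ) :
    Integrable (fun x : E => C * (1 + ‖x‖)) (stdGaussian E) :=
  ((integrable_const 1).add IsGaussian.integrable_id.norm).const_mul C

lemma integrable_stdGaussian_of_linear_growth {f : E → F}
    (hf : AEStronglyMeasurable f (stdGaussian E)) {C : ℝ} (hC : ∀ x, ‖f x‖ ≤ C * (1 + ‖x‖)) :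
    Integrable f (stdGaussian E) :=
  (integrable_one_add_norm_stdGaussian C).mono' hf (.of_forall hC)

variable [NormedSpace ℝ F]

lemma BoundedC1.integrable_inner_smul {f : E → F} (hf : BoundedC1 f) (v : E) :
    Integrable (fun x => ⟪v, x⟫ • f x) (stdGaussian E) := by
  obtain ⟨C, hC⟩ := hf.bounded
  have hcont := hf.continuous
  refine integrable_stdGaussian_of_linear_growth (C := ‖v‖ * C) (by fun_prop) fun x => ?_
  calc ‖⟪v, x⟫ • f x‖ ≤ (‖v‖ * ‖x‖) * C := by
        rw [norm_smul]
        exact mul_le_mul (norm_inner_le_norm v x) (hC x) (norm_nonneg _) (by positivity)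
    _ ≤ ‖v‖ * C * (1 + ‖x‖) := by
        have : 0 ≤ ‖v‖ * C := mul_nonneg (norm_nonneg v) ((norm_nonneg _).trans (hC x))
        linarith

lemma BoundedC1.integral_inner_smul {f : E → F} (hf : BoundedC1 f) (v : E) :
    ∫ x, ⟪v, x⟫ • f x ∂stdGaussian E = ∫ x, fderiv ℝ f x v ∂stdGaussian E := by
  obtain ⟨C, hC⟩ := hf.fderiv_bounded
  have hdf : Integrable (fun x => fderiv ℝ f x v) (stdGaussian E) :=
    .of_bound (hf.continuous_fderiv.clm_apply continuous_const).aestronglyMeasurable (C * ‖v‖)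
      (.of_forall fun x => (fderiv ℝ f x).le_of_opNorm_le (hC x) v)
  have hparts := integral_smul_fderiv_eq_neg_fderiv_smul_of_integrable (𝕜 := ℝ) (v := v)
    (μ := (volume : Measure E)) (f := gaussianDensity) (g := f) ?_
    (integrable_stdGaussian_iff.1 hdf) (integrable_stdGaussian_iff.1 (hf.integrable _))
    (fun x _ => contDiff_gaussianDensity.differentiable one_ne_zero x)
    (fun x _ => (hf.hasFDerivAt x).differentiableAt)
  · simp only [integral_stdGaussian, hparts, ← integral_neg, fderiv_gaussianDensity, neg_smul,
      neg_neg, mul_comm ⟪v, _⟫, mul_smul]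
  · refine (integrable_stdGaussian_iff.1 (hf.integrable_inner_smul v)).neg.congr
      (.of_forall fun x => ?_)
    simp only [fderiv_gaussianDensity, Pi.neg_apply, neg_smul, mul_comm ⟪v, x⟫, mul_smul]

lemma BoundedC1.integral_apply_self {ω : E → E →L[ℝ] ℝ} (hω : BoundedC1 ω) :
    ∫ x, ω x x ∂stdGaussian E = ∫ x, bilinTrace E (fderiv ℝ ω x) ∂stdGaussian E := by
  set e := stdOrthonormalBasis ℝ E
  have hdω := hω.integrable_fderiv_comp continuous_id' (stdGaussian E)
  calc ∫ x, ω x x ∂stdGaussian E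
      = ∫ x, ∑ j, (⟪e j, x⟫ • ω x) (e j) ∂stdGaussian E := by
        congr! 2 with x
        conv_lhs => enter [2]; rw [← e.sum_repr' x]
        simp only [map_sum, map_smul, _root_.smul_apply]
    _ = ∑ j, (∫ x, ⟪e j, x⟫ • ω x ∂stdGaussian E) (e j) := by
        rw [integral_finsetSum _ fun j _ =>
          (hω.integrable_inner_smul _).apply_continuousLinearMap _]
        simp only [ContinuousLinearMap.integral_apply (hω.integrable_inner_smul _)]
    _ = bilinTrace E (∫ x, fderiv ℝ ω x ∂stdGaussian E) := by
        simp only [bilinTrace_apply, hω.integral_inner_smul,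
          ContinuousLinearMap.integral_apply hdω, e]
    _ = ∫ x, bilinTrace E (fderiv ℝ ω x) ∂stdGaussian E :=
        ((bilinTrace E).integral_comp_comm hdω).symm

lemma BoundedC1.integral_apply_self_affine {ω : E → E →L[ℝ] ℝ} (hω : BoundedC1 ω) (y : E)
    (s : ℝ) : ∫ x, ω (y + s • x) x ∂stdGaussian E =
      s * ∫ x, bilinTrace E (fderiv ℝ ω (y + s • x)) ∂stdGaussian E := by
  rw [(hω.comp_add_smul y s).integral_apply_self, ← integral_const_mul]
  refine integral_congr_ae (.of_forall fun x => ?_)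
  simp only
  rw [fderiv_fun_comp x (hω.hasFDerivAt _).differentiableAt
    (hasFDerivAt_add_smul y x s).differentiableAt, (hasFDerivAt_add_smul y x s).fderiv]
  simp

end Stein

section Rotation

variable {E : Type*} [NormedAddCommGroup E] [NormedSpace ℝ E]

lemma hasDerivAt_rotation (x z : E) (θ : ℝ) :
    HasDerivAt (fun θ => Real.sin θ • x + Real.cos θ • z)
      (Real.cos θ • x - Real.sin θ • z) θ := by
  simpa [sub_eq_add_neg] using
    ((Real.hasDerivAt_sin θ).smul_const x).fun_add ((Real.hasDerivAt_cos θ).smul_const z)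

lemma norm_rotation_le (x z : E) (θ : ℝ) :
    ‖Real.cos θ • x - Real.sin θ • z‖ ≤ ‖x‖ + ‖z‖ := by
  refine (norm_sub_le _ _).trans (add_le_add ?_ ?_) <;> rw [norm_smul]
  · exact mul_le_of_le_one_left (norm_nonneg x) (Real.abs_cos_le_one θ)
  · exact mul_le_of_le_one_left (norm_nonneg z) (Real.abs_sin_le_one θ)

end Rotation

section GaussianAverage

variable {E F : Type*} [NormedAddCommGroup E] [InnerProductSpace ℝ E] [FiniteDimensional ℝ E]
  [MeasurableSpace E] [BorelSpace E] [NormedAddCommGroup F] [NormedSpace ℝ F]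

/-- The average `E f(x + a Z)` of `f` over a Gaussian `Z`, that is, the heat semigroup at time
`a ^ 2 / 2` applied to `f`. -/
noncomputable def gaussianAverage (a : ℝ) (f : E → F) (x : E) : F :=
  ∫ z, f (x + a • z) ∂stdGaussian E

lemma norm_gaussianAverage_le {f : E → F} {C : ℝ} (hC : ∀ x, ‖f x‖ ≤ C) (a : ℝ) (x : E) :
    ‖gaussianAverage a f x‖ ≤ C := by
  simpa [gaussianAverage] using norm_integral_le_of_norm_le_const (μ := stdGaussian E)
    (.of_forall fun z => hC (x + a • z))

lemma BoundedC1.le_gaussianAverage {f : E → ℝ} (hf : BoundedC1 f) {ε : ℝ} (hε : ∀ x, ε ≤ f x)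
    (a : ℝ) (x : E) : ε ≤ gaussianAverage a f x := by
  simpa [gaussianAverage] using integral_mono (μ := stdGaussian E) (integrable_const ε)
    ((hf.comp_add_smul x a).integrable _) fun z => hε (x + a • z)

lemma BoundedC1.hasFDerivAt_gaussianAverage {f : E → F} (hf : BoundedC1 f) (a : ℝ) (x : E) :
    HasFDerivAt (gaussianAverage a f) (gaussianAverage a (fderiv ℝ f) x) x := by
  obtain ⟨C, hC⟩ := hf.fderiv_bounded
  have hcont := hf.continuous
  have hcont' := hf.continuous_fderiv
  refine hasFDerivAt_integral_of_dominated_of_fderiv_le (bound := fun _ => C)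
    (F' := fun y z => fderiv ℝ f (y + a • z)) univ_mem
    (.of_forall fun y => by fun_prop) ((hf.comp_add_smul x a).integrable _) (by fun_prop)
    (.of_forall fun z y _ => hC _) (integrable_const C) (.of_forall fun z y _ => ?_)
  exact (hasFDerivAt_comp_add_right (a • z)).2 (hf.hasFDerivAt (y + a • z))

lemma BoundedC1.fderiv_gaussianAverage {f : E → F} (hf : BoundedC1 f) (a : ℝ) :
    fderiv ℝ (gaussianAverage a f) = gaussianAverage a (fderiv ℝ f) :=
  funext fun x => (hf.hasFDerivAt_gaussianAverage a x).fderiv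

lemma BoundedC1.fderiv_gaussianAverage_apply {f : E → F} (hf : BoundedC1 f) (a : ℝ) (x v : E) :
    fderiv ℝ (gaussianAverage a f) x v = ∫ z, fderiv ℝ f (x + a • z) v ∂stdGaussian E := by
  rw [hf.fderiv_gaussianAverage]
  exact ContinuousLinearMap.integral_apply
    (hf.integrable_fderiv_comp (φ := fun z => x + a • z) (by fun_prop) _) v

protected lemma BoundedC1.gaussianAverage {f : E → F} (hf : BoundedC1 f) (a : ℝ) :
    BoundedC1 (gaussianAverage a f) := by
  obtain ⟨C, hC⟩ := hf.bounded
  obtain ⟨C', hC'⟩ := hf.fderiv_bounded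
  have hcont' := hf.continuous_fderiv
  refine ⟨contDiff_one_iff_fderiv.2
    ⟨fun x => (hf.hasFDerivAt_gaussianAverage a x).differentiableAt, ?_⟩,
    ⟨C, norm_gaussianAverage_le hC a⟩, ?_⟩
  · rw [hf.fderiv_gaussianAverage]
    exact continuous_of_dominated (fun x => by fun_prop) (fun x => .of_forall fun z => hC' _)
      (integrable_const C') (.of_forall fun z => by fun_prop)
  · rw [hf.fderiv_gaussianAverage]
    exact ⟨C', norm_gaussianAverage_le hC' a⟩

lemma BoundedC1.integrable_fderiv_apply_affine {f : E → F} (hf : BoundedC1 f) (y : E) (s : ℝ) :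
    Integrable (fun z => fderiv ℝ f (y + s • z) z) (stdGaussian E) := by
  obtain ⟨C, hC⟩ := hf.fderiv_bounded
  have hcont' := hf.continuous_fderiv
  refine integrable_stdGaussian_of_linear_growth (C := C)
    (Continuous.aestronglyMeasurable (by fun_prop)) fun z => ?_
  refine ((fderiv ℝ f (y + s • z)).le_of_opNorm_le (hC _) z).trans ?_
  have : 0 ≤ C := (norm_nonneg _).trans (hC y)
  gcongr
  linarith

lemma BoundedC1.hasDerivAt_gaussianAverage_rotation {f : E → ℝ} (hf : BoundedC1 f)
    (hf' : BoundedC1 (fderiv ℝ f)) (x : E) (θ : ℝ) :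
    HasDerivAt (fun θ => gaussianAverage (Real.cos θ) f (Real.sin θ • x))
      (Real.cos θ * (fderiv ℝ (gaussianAverage (Real.cos θ) f) (Real.sin θ • x) x -
        Real.sin θ * bilinTrace E
          (fderiv ℝ (fderiv ℝ (gaussianAverage (Real.cos θ) f)) (Real.sin θ • x)))) θ := by
  rw [hf.fderiv_gaussianAverage, hf'.fderiv_gaussianAverage]
  obtain ⟨C, hC⟩ := hf.fderiv_bounded
  have hcont := hf.continuous
  have hcont' := hf.continuous_fderiv
  have hint := (hf'.comp_add_smul (Real.sin θ • x) (Real.cos θ)).integrable (stdGaussian E)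
  have hint' := hf'.integrable_fderiv_comp (φ := fun z => Real.sin θ • x + Real.cos θ • z)
    (by fun_prop) (stdGaussian E)
  have hderiv := (hasDerivAt_integral_of_dominated_loc_of_deriv_le (μ := stdGaussian E)
    (F := fun θ z => f (Real.sin θ • x + Real.cos θ • z))
    (F' := fun θ z => fderiv ℝ f (Real.sin θ • x + Real.cos θ • z)
      (Real.cos θ • x - Real.sin θ • z)) (x₀ := θ) (bound := fun z => C * (‖x‖ + ‖z‖))
    univ_mem (.of_forall fun _ => by fun_prop) ((hf.comp_add_smul _ _).integrable _)
    (Continuous.aestronglyMeasurable (by fun_prop)) (.of_forall fun z θ _ => ?_)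
    (((integrable_const _).add IsGaussian.integrable_id.norm).const_mul C)
    (.of_forall fun z θ _ => ?_)).2
  · refine hderiv.congr_deriv (Eq.symm ?_)
    simp only [map_sub, map_smul, smul_eq_mul]
    rw [integral_sub ((hint.apply_continuousLinearMap x).const_mul _)
      ((hf.integrable_fderiv_apply_affine _ _).const_mul _), integral_const_mul,
      integral_const_mul, hf'.integral_apply_self_affine, ← ContinuousLinearMap.integral_apply hint,
      (bilinTrace E).integral_comp_comm hint']
    exact (mul_sub _ _ _).trans (congrArg _ (mul_left_comm _ _ _))
  · exact (ContinuousLinearMap.le_of_opNorm_le _ (hC _) _).trans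
      (mul_le_mul_of_nonneg_left (norm_rotation_le x z θ) ((norm_nonneg _).trans (hC 0)))
  · exact (hf.hasFDerivAt _).comp_hasDerivAt θ (hasDerivAt_rotation x z θ)

end GaussianAverage

section Product

variable {ι E : Type*} [Fintype ι] [NormedAddCommGroup E] {W : ι → E → ℝ}

lemma hasFDerivAt_prod_rpow [NormedSpace ℝ E] {W' : ι → E →L[ℝ] ℝ} {x : E} (c : ι → ℝ)
    (hW : ∀ i, HasFDerivAt (W i) (W' i) x) (hpos : ∀ i, 0 < W i x) :
    HasFDerivAt (fun x => ∏ i, W i x ^ c i)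
      ((∏ i, W i x ^ c i) • ∑ i, c i • (W i x)⁻¹ • W' i) x := by
  classical
  refine (HasFDerivAt.finsetProd fun i _ =>
    (hW i).rpow_const (p := c i) (.inl (hpos i).ne')).congr_fderiv ?_
  rw [Finset.smul_sum]
  refine Finset.sum_congr rfl fun i hi => ?_
  rw [smul_smul, smul_smul, smul_smul, ← Finset.prod_erase_mul _ _ hi,
    Real.rpow_sub_one (hpos i).ne']
  congr 1
  ring

/-- The derivative of `∑ i, c i * log (W i)`. -/
noncomputable def logGradient [NormedSpace ℝ E] (c : ι → ℝ) (W : ι → E → ℝ) (x : E) : E →L[ℝ] ℝ :=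
  ∑ i, c i • (W i x)⁻¹ • fderiv ℝ (W i) x

lemma fderiv_prod_rpow [NormedSpace ℝ E] (c : ι → ℝ) (hW : ∀ i, Differentiable ℝ (W i))
    (hpos : ∀ i x, 0 < W i x) :
    fderiv ℝ (fun x => ∏ i, W i x ^ c i) = fun x => (∏ i, W i x ^ c i) • logGradient c W x :=
  funext fun x => (hasFDerivAt_prod_rpow c (fun i => (hW i x).hasFDerivAt) (hpos · x)).fderiv

lemma hasFDerivAt_inv_smul_fderiv [NormedSpace ℝ E] {w : E → ℝ} {x : E}
    (hw : DifferentiableAt ℝ w x) (hw' : DifferentiableAt ℝ (fderiv ℝ w) x) (hx : w x ≠ 0) :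
    HasFDerivAt (fun x => (w x)⁻¹ • fderiv ℝ w x)
      ((w x)⁻¹ • fderiv ℝ (fderiv ℝ w) x -
        ((w x)⁻¹ • fderiv ℝ w x).smulRight ((w x)⁻¹ • fderiv ℝ w x)) x := by
  refine (((hasDerivAt_inv hx).comp_hasFDerivAt x hw.hasFDerivAt).fun_smul
    hw'.hasFDerivAt).congr_fderiv ?_
  ext u v
  simp only [Function.comp_apply, neg_smul, _root_.add_apply, _root_.smul_apply,
    ContinuousLinearMap.smulRight_apply, _root_.neg_apply, smul_eq_mul, _root_.sub_apply]
  field_simp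
  ring

/-- The sum `∑ i, c i * Δ (W i) / W i`. -/
noncomputable def laplacianQuotient [InnerProductSpace ℝ E] [FiniteDimensional ℝ E]
    (c : ι → ℝ) (W : ι → E → ℝ) (x : E) : ℝ :=
  ∑ i, c i * ((W i x)⁻¹ * bilinTrace E (fderiv ℝ (fderiv ℝ (W i)) x))

-- With `Φ = ∏ Wᵢ ^ cᵢ` this is `Δ Φ / Φ = |∇ log Φ|² + Δ log Φ`.
lemma bilinTrace_fderiv_fderiv_prod_rpow [InnerProductSpace ℝ E] [FiniteDimensional ℝ E]
    (c : ι → ℝ) (hW : ∀ i, Differentiable ℝ (W i))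
    (hW' : ∀ i, Differentiable ℝ (fderiv ℝ (W i))) (hpos : ∀ i x, 0 < W i x) (x : E) :
    bilinTrace E (fderiv ℝ (fderiv ℝ fun x => ∏ i, W i x ^ c i) x) =
      (∏ i, W i x ^ c i) * (‖logGradient c W x‖ ^ 2 + ∑ i, c i *
        ((W i x)⁻¹ * bilinTrace E (fderiv ℝ (fderiv ℝ (W i)) x) -
          ‖(W i x)⁻¹ • fderiv ℝ (W i) x‖ ^ 2)) := by
  have hΦ := hasFDerivAt_prod_rpow c (fun i => (hW i x).hasFDerivAt) (hpos · x)
  have hlog : HasFDerivAt (logGradient c W) (∑ i, c i • ((W i x)⁻¹ • fderiv ℝ (fderiv ℝ (W i)) x -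
      ((W i x)⁻¹ • fderiv ℝ (W i) x).smulRight ((W i x)⁻¹ • fderiv ℝ (W i) x))) x :=
    HasFDerivAt.fun_sum fun i _ =>
      (hasFDerivAt_inv_smul_fderiv (hW i x) (hW' i x) (hpos i x).ne').const_smul (c i)
  have hsmul : ((∏ i, W i x ^ c i) • logGradient c W x).smulRight (logGradient c W x) =
      (∏ i, W i x ^ c i) • (logGradient c W x).smulRight (logGradient c W x) := by
    ext; simp [mul_assoc]
  rw [fderiv_prod_rpow c hW hpos, (hΦ.fun_smul hlog).fderiv]
  change bilinTrace E (_ + ((∏ i, W i x ^ c i) • logGradient c W x).smulRight _) = _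
  rw [hsmul]
  simp only [map_add, map_smul, map_sum, map_sub, bilinTrace_smulRight, smul_eq_mul]
  ring

end Product

section Geometric

variable {ι E : Type*} [Fintype ι] [NormedAddCommGroup E] [InnerProductSpace ℝ E]
  [FiniteDimensional ℝ E] {V : ι → Type*} [∀ i, NormedAddCommGroup (V i)]
  [∀ i, InnerProductSpace ℝ (V i)] [∀ i, FiniteDimensional ℝ (V i)]
  {c : ι → ℝ} {B : ∀ i, E →L[ℝ] V i}

/-- A *geometric* Brascamp–Lieb datum: `cᵢ ≥ 0`, `Bᵢ Bᵢ* = 1` and `∑ cᵢ Bᵢ* Bᵢ = 1`. The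
standard Gaussians are then extremizers of the inequality, with constant `1`. -/
structure IsGeometric (c : ι → ℝ) (B : ∀ i, E →L[ℝ] V i) : Prop where
  nonneg : ∀ i, 0 ≤ c i
  comp_adjoint : ∀ i, B i ∘L (B i).adjoint = .id ℝ (V i)
  sum_adjoint_comp : ∑ i, c i • ((B i).adjoint ∘L B i) = .id ℝ E

namespace IsGeometric

lemma apply_adjoint (h : IsGeometric c B) (i : ι) (w : V i) : B i ((B i).adjoint w) = w :=
  DFunLike.congr_fun (h.comp_adjoint i) w

lemma sum_smul_adjoint_apply (h : IsGeometric c B) (x : E) :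
    ∑ i, c i • (B i).adjoint (B i x) = x := by
  simpa using DFunLike.congr_fun h.sum_adjoint_comp x

lemma norm_adjoint_apply (h : IsGeometric c B) (i : ι) (w : V i) : ‖(B i).adjoint w‖ = ‖w‖ := by
  rw [← sq_eq_sq₀ (norm_nonneg _) (norm_nonneg _), ← real_inner_self_eq_norm_sq,
    ← real_inner_self_eq_norm_sq, (B i).adjoint_inner_left, h.apply_adjoint]

lemma sum_norm_sq (h : IsGeometric c B) (x : E) : ∑ i, c i * ‖B i x‖ ^ 2 = ‖x‖ ^ 2 := by
  calc ∑ i, c i * ‖B i x‖ ^ 2 = ⟪∑ i, c i • (B i).adjoint (B i x), x⟫ := by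
        simp only [sum_inner, real_inner_smul_left, ContinuousLinearMap.adjoint_inner_left,
          real_inner_self_eq_norm_sq]
    _ = ‖x‖ ^ 2 := by rw [h.sum_smul_adjoint_apply, real_inner_self_eq_norm_sq]

lemma sum_finrank (h : IsGeometric c B) :
    ∑ i, c i * (Module.finrank ℝ (V i) : ℝ) = Module.finrank ℝ E := by
  have htrace (i : ι) :
      LinearMap.trace ℝ E ((B i).adjoint.toLinearMap ∘ₗ (B i).toLinearMap) =
        Module.finrank ℝ (V i) := by
    rw [LinearMap.trace_comp_comm', ← ContinuousLinearMap.toLinearMap_comp, h.comp_adjoint,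
      ContinuousLinearMap.coe_id, LinearMap.trace_id]
  have := congrArg (fun L : E →L[ℝ] E => LinearMap.trace ℝ E L) h.sum_adjoint_comp
  simpa [htrace] using this

lemma norm_sum_smul_sq_le (h : IsGeometric c B) {l : ι → E →L[ℝ] ℝ}
    (hl : ∀ i x, l i ((B i).adjoint (B i x)) = l i x) :
    ‖∑ i, c i • l i‖ ^ 2 ≤ ∑ i, c i * ‖l i‖ ^ 2 := by
  set v := (InnerProductSpace.toDual ℝ E).symm (∑ i, c i • l i)
  have hv : ‖v‖ = ‖∑ i, c i • l i‖ := LinearIsometryEquiv.norm_map _ _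
  have hterm (i : ι) : l i v ≤ (‖l i‖ ^ 2 + ‖B i v‖ ^ 2) / 2 := by
    calc l i v ≤ ‖l i‖ * ‖B i v‖ := by
          rw [← hl, ← h.norm_adjoint_apply i]
          exact (le_abs_self _).trans ((l i).le_opNorm _)
      _ ≤ _ := by linarith [two_mul_le_add_sq ‖l i‖ ‖B i v‖]
  have : ‖v‖ ^ 2 ≤ ∑ i, c i * ((‖l i‖ ^ 2 + ‖B i v‖ ^ 2) / 2) := by
    calc ‖v‖ ^ 2 = ∑ i, c i * l i v := by
          rw [← real_inner_self_eq_norm_sq, InnerProductSpace.toDual_symm_apply]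
          simp
      _ ≤ _ := Finset.sum_le_sum fun i _ => mul_le_mul_of_nonneg_left (hterm i) (h.nonneg i)
  simp only [add_div, mul_add, Finset.sum_add_distrib, ← mul_div_assoc, ← Finset.sum_div,
    h.sum_norm_sq] at this
  rw [← hv]
  linarith

lemma bilinTrace_fderiv_fderiv_prod_rpow_le (h : IsGeometric c B) {W : ι → E → ℝ}
    (hW : ∀ i, Differentiable ℝ (W i)) (hW' : ∀ i, Differentiable ℝ (fderiv ℝ (W i)))
    (hpos : ∀ i x, 0 < W i x)
    (hinv : ∀ i x v, fderiv ℝ (W i) x ((B i).adjoint (B i v)) = fderiv ℝ (W i) x v) (x : E) :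
    bilinTrace E (fderiv ℝ (fderiv ℝ fun x => ∏ i, W i x ^ c i) x) ≤
      (∏ i, W i x ^ c i) * laplacianQuotient c W x := by
  have hle := h.norm_sum_smul_sq_le (l := fun i => (W i x)⁻¹ • fderiv ℝ (W i) x)
    fun i v => by simp [hinv]
  rw [bilinTrace_fderiv_fderiv_prod_rpow c hW hW' hpos]
  refine mul_le_mul_of_nonneg_left ?_ (Finset.prod_nonneg fun i _ => by positivity [hpos i x])
  simp only [mul_sub, Finset.sum_sub_distrib, logGradient, laplacianQuotient]
  linarith

end IsGeometric

end Geometric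

section ProductBounds

variable {ι E F : Type*} [Fintype ι] [NormedAddCommGroup E] [NormedSpace ℝ E]
  [NormedAddCommGroup F] [NormedSpace ℝ F] {c : ι → ℝ} {W : ι → E → ℝ} {ε : ℝ}

lemma BoundedC1.fderiv_prod_rpow [FiniteDimensional ℝ E] (c : ι → ℝ) (hε : 0 < ε)
    (hW : ∀ i, BoundedC1 (W i)) (hW' : ∀ i, BoundedC1 (fderiv ℝ (W i)))
    (hWε : ∀ i x, ε ≤ W i x) : BoundedC1 (fderiv ℝ fun x => ∏ i, W i x ^ c i) := by
  rw [BrascampLieb.fderiv_prod_rpow c (fun i x => ((hW i).hasFDerivAt x).differentiableAt)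
    fun i x => hε.trans_le (hWε i x)]
  have hlog : BoundedC1 (logGradient c W) := BoundedC1.sum fun i =>
    contDiff_comp (contDiff_const_smul (c i)) (((hW i).inv hε (hWε i)).smul (hW' i))
  exact (BoundedC1.prod_rpow c hε hW hWε).smul hlog

lemma norm_sum_smul_inv_smul_le (hc : ∀ i, 0 ≤ c i) (hε : 0 < ε) {w : ι → ℝ} (hw : ∀ i, ε ≤ w i)
    {t : ι → F} {T : ι → ℝ} (ht : ∀ i, ‖t i‖ ≤ T i) :
    ‖∑ i, c i • (w i)⁻¹ • t i‖ ≤ ∑ i, c i * (ε⁻¹ * T i) := by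
  refine norm_sum_le_of_le _ fun i _ => ?_
  have hw0 : 0 ≤ (w i)⁻¹ := inv_nonneg.2 (hε.le.trans (hw i))
  rw [norm_smul, norm_smul, Real.norm_of_nonneg (hc i), Real.norm_of_nonneg hw0]
  exact mul_le_mul_of_nonneg_left (mul_le_mul (inv_anti₀ hε (hw i)) (ht i) (norm_nonneg _)
    (inv_nonneg.2 hε.le)) (hc i)

lemma norm_prod_rpow_le (hc : ∀ i, 0 ≤ c i) {w C : ι → ℝ} (hw : ∀ i, ‖w i‖ ≤ C i)
    (hw0 : ∀ i, 0 ≤ w i) : ‖∏ i, w i ^ c i‖ ≤ ∏ i, C i ^ c i := by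
  rw [Real.norm_of_nonneg (Finset.prod_nonneg fun i _ => Real.rpow_nonneg (hw0 i) _)]
  exact Finset.prod_le_prod (fun i _ => Real.rpow_nonneg (hw0 i) _) fun i _ =>
    Real.rpow_le_rpow (hw0 i) ((Real.le_norm_self _).trans (hw i)) (hc i)

end ProductBounds

section Interpolation

variable {ι E : Type*} [Fintype ι] [NormedAddCommGroup E] [InnerProductSpace ℝ E]
  [FiniteDimensional ℝ E] [MeasurableSpace E] [BorelSpace E] {c : ι → ℝ} {G : ι → E → ℝ} {ε : ℝ}

/-- The integrand `∏ i, (E_z G i (sin θ • x + cos θ • z)) ^ c i` of the interpolation, as a function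
of `y = sin θ • x`. -/
noncomputable def interpolant (c : ι → ℝ) (G : ι → E → ℝ) (θ : ℝ) (y : E) : ℝ :=
  ∏ i, gaussianAverage (Real.cos θ) (G i) y ^ c i

/-- The derivative of `interpolant c G θ (sin θ • x)` in `θ`. -/
noncomputable def interpolantDeriv (c : ι → ℝ) (G : ι → E → ℝ) (θ : ℝ) (x : E) : ℝ :=
  Real.cos θ * (fderiv ℝ (interpolant c G θ) (Real.sin θ • x) x -
    Real.sin θ * (interpolant c G θ (Real.sin θ • x) *
      laplacianQuotient c (fun i => gaussianAverage (Real.cos θ) (G i)) (Real.sin θ • x)))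

lemma hasDerivAt_interpolant (hε : 0 < ε) (hG : ∀ i, BoundedC1 (G i))
    (hG' : ∀ i, BoundedC1 (fderiv ℝ (G i))) (hGε : ∀ i x, ε ≤ G i x) (x : E) (θ : ℝ) :
    HasDerivAt (fun θ => interpolant c G θ (Real.sin θ • x)) (interpolantDeriv c G θ x) θ := by
  have hpos (i : ι) (θ : ℝ) (y : E) : 0 < gaussianAverage (Real.cos θ) (G i) y :=
    hε.trans_le ((hG i).le_gaussianAverage (hGε i) _ _)
  have hderiv := (hasFDerivAt_prod_rpow c (fun i =>
    ((hG i).hasDerivAt_gaussianAverage_rotation (hG' i) x θ).hasFDerivAt)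
    fun i => hpos i θ _).hasDerivAt
  refine hderiv.congr_deriv ?_
  unfold interpolantDeriv interpolant
  rw [fderiv_prod_rpow c (fun i y => ((hG i).hasFDerivAt_gaussianAverage _ y).differentiableAt)
    fun i => hpos i θ]
  simp only [logGradient, laplacianQuotient, _root_.smul_apply, _root_.sum_apply,
    ContinuousLinearMap.toSpanSingleton_apply, smul_eq_mul, one_mul]
  rw [mul_left_comm (Real.sin θ), ← mul_sub, mul_left_comm, Finset.mul_sum _ _ (Real.sin θ),
    ← Finset.sum_sub_distrib, Finset.mul_sum _ _ (Real.cos θ)]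
  exact congrArg _ (Finset.sum_congr rfl fun i _ => by ring)

omit [BorelSpace E] in
lemma norm_interpolantDeriv_le {θ : ℝ} {x : E} {D L : ℝ}
    (hD : ‖fderiv ℝ (interpolant c G θ) (Real.sin θ • x)‖ ≤ D)
    (hL : ‖interpolant c G θ (Real.sin θ • x) * laplacianQuotient c
      (fun i => gaussianAverage (Real.cos θ) (G i)) (Real.sin θ • x)‖ ≤ L) :
    ‖interpolantDeriv c G θ x‖ ≤ (D + L) * (1 + ‖x‖) := by
  have hD0 := (norm_nonneg _).trans hD
  have hL0 := (norm_nonneg _).trans hL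
  calc ‖interpolantDeriv c G θ x‖ ≤ 1 * (D * ‖x‖ + 1 * L) := by
        rw [interpolantDeriv, norm_mul]
        refine mul_le_mul (Real.abs_cos_le_one θ) ((norm_sub_le _ _).trans (add_le_add
          (ContinuousLinearMap.le_of_opNorm_le _ hD x) ?_)) (norm_nonneg _) zero_le_one
        rw [norm_mul]
        exact mul_le_mul (Real.abs_sin_le_one θ) hL (norm_nonneg _) zero_le_one
    _ ≤ (D + L) * (1 + ‖x‖) := by
        nlinarith [mul_nonneg hL0 (norm_nonneg x)]

lemma exists_norm_interpolantDeriv_le (hc : ∀ i, 0 ≤ c i) (hε : 0 < ε)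
    (hG : ∀ i, BoundedC1 (G i)) (hG' : ∀ i, BoundedC1 (fderiv ℝ (G i)))
    (hGε : ∀ i x, ε ≤ G i x) :
    ∃ C, ∀ θ x, ‖interpolantDeriv c G θ x‖ ≤ C * (1 + ‖x‖) := by
  choose C₀ hC₀ using fun i => (hG i).bounded
  choose C₁ hC₁ using fun i => (hG i).fderiv_bounded
  choose C₂ hC₂ using fun i => (hG' i).fderiv_bounded
  set P := ∏ i, C₀ i ^ c i
  set K₁ := ∑ i, c i * (ε⁻¹ * C₁ i)
  set K₂ := ∑ i, c i * (ε⁻¹ * (‖bilinTrace E‖ * C₂ i))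
  refine ⟨P * K₁ + P * K₂, fun θ x => ?_⟩
  set y := Real.sin θ • x
  set W := fun i => gaussianAverage (Real.cos θ) (G i)
  have hWε (i : ι) (y : E) : ε ≤ W i y := (hG i).le_gaussianAverage (hGε i) _ y
  have hΦ : ‖interpolant c G θ y‖ ≤ P := norm_prod_rpow_le hc
    (fun i => norm_gaussianAverage_le (hC₀ i) _ y) fun i => hε.le.trans (hWε i y)
  have hgrad : ‖logGradient c W y‖ ≤ K₁ := norm_sum_smul_inv_smul_le hc hε (hWε · y) fun i => by
    rw [(hG i).fderiv_gaussianAverage]; exact norm_gaussianAverage_le (hC₁ i) _ y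
  have hlap : ‖laplacianQuotient c W y‖ ≤ K₂ :=
    norm_sum_smul_inv_smul_le hc hε (hWε · y) fun i => by
      rw [(hG i).fderiv_gaussianAverage, (hG' i).fderiv_gaussianAverage]
      exact (bilinTrace E).le_opNorm_of_le (norm_gaussianAverage_le (hC₂ i) _ y)
  have hderiv : ‖fderiv ℝ (interpolant c G θ) y‖ ≤ P * K₁ := by
    unfold interpolant
    rw [fderiv_prod_rpow c (fun i y => ((hG i).hasFDerivAt_gaussianAverage _ y).differentiableAt)
      fun i y => hε.trans_le (hWε i y), norm_smul]
    exact mul_le_mul hΦ hgrad (norm_nonneg _) ((norm_nonneg _).trans hΦ)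
  have hquot : ‖interpolant c G θ y * laplacianQuotient c W y‖ ≤ P * K₂ := by
    rw [norm_mul]
    exact mul_le_mul hΦ hlap (norm_nonneg _) ((norm_nonneg _).trans hΦ)
  exact norm_interpolantDeriv_le hderiv hquot

end Interpolation

section Monotonicity

variable {ι E : Type*} [Fintype ι] [NormedAddCommGroup E] [InnerProductSpace ℝ E]
  [FiniteDimensional ℝ E] [MeasurableSpace E] [BorelSpace E] {c : ι → ℝ} {G : ι → E → ℝ} {ε : ℝ}

lemma BoundedC1.interpolant (c : ι → ℝ) (hε : 0 < ε) (hG : ∀ i, BoundedC1 (G i))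
    (hGε : ∀ i x, ε ≤ G i x) (θ : ℝ) : BoundedC1 (interpolant c G θ) :=
  .prod_rpow c hε (fun i => (hG i).gaussianAverage _) fun i => (hG i).le_gaussianAverage (hGε i) _

lemma BoundedC1.fderiv_interpolant (c : ι → ℝ) (hε : 0 < ε) (hG : ∀ i, BoundedC1 (G i))
    (hG' : ∀ i, BoundedC1 (fderiv ℝ (G i))) (hGε : ∀ i x, ε ≤ G i x) (θ : ℝ) :
    BoundedC1 (fderiv ℝ (BrascampLieb.interpolant c G θ)) :=
  .fderiv_prod_rpow c hε (fun i => (hG i).gaussianAverage _)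
    (fun i => (hG i).fderiv_gaussianAverage _ ▸ (hG' i).gaussianAverage _)
    fun i => (hG i).le_gaussianAverage (hGε i) _

lemma continuous_interpolantDeriv (hε : 0 < ε) (hG : ∀ i, BoundedC1 (G i))
    (hG' : ∀ i, BoundedC1 (fderiv ℝ (G i))) (hGε : ∀ i x, ε ≤ G i x) (θ : ℝ) :
    Continuous (interpolantDeriv c G θ) := by
  have hΦ := BoundedC1.interpolant c hε hG hGε θ
  have hΦc := hΦ.continuous
  have hΦ'c := hΦ.continuous_fderiv
  have hW (i : ι) : Continuous fun y => (gaussianAverage (Real.cos θ) (G i) y)⁻¹ :=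
    ((hG i).gaussianAverage _).continuous.inv₀ fun y =>
      (hε.trans_le ((hG i).le_gaussianAverage (hGε i) _ y)).ne'
  have hW'' (i : ι) : Continuous (fderiv ℝ (fderiv ℝ (gaussianAverage (Real.cos θ) (G i)))) := by
    rw [(hG i).fderiv_gaussianAverage]
    exact ((hG' i).gaussianAverage _).continuous_fderiv
  have hlap : Continuous (laplacianQuotient c fun i => gaussianAverage (Real.cos θ) (G i)) := by
    unfold laplacianQuotient
    fun_prop
  unfold interpolantDeriv
  fun_prop

lemma hasDerivAt_integral_interpolant (hc : ∀ i, 0 ≤ c i) (hε : 0 < ε)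
    (hG : ∀ i, BoundedC1 (G i)) (hG' : ∀ i, BoundedC1 (fderiv ℝ (G i)))
    (hGε : ∀ i x, ε ≤ G i x) (θ : ℝ) :
    Integrable (interpolantDeriv c G θ) (stdGaussian E) ∧
      HasDerivAt (fun θ => ∫ x, interpolant c G θ (Real.sin θ • x) ∂stdGaussian E)
        (∫ x, interpolantDeriv c G θ x ∂stdGaussian E) θ := by
  obtain ⟨C, hC⟩ := exists_norm_interpolantDeriv_le hc hε hG hG' hGε
  have hΦ (θ : ℝ) : BoundedC1 fun x => interpolant c G θ (Real.sin θ • x) := by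
    simpa using (BoundedC1.interpolant c hε hG hGε θ).comp_add_smul 0 (Real.sin θ)
  exact hasDerivAt_integral_of_dominated_loc_of_deriv_le univ_mem
    (.of_forall fun θ => (hΦ θ).continuous.aestronglyMeasurable) ((hΦ θ).integrable _)
    (continuous_interpolantDeriv hε hG hG' hGε θ).aestronglyMeasurable
    (.of_forall fun x θ _ => hC θ x) (integrable_one_add_norm_stdGaussian C)
    (.of_forall fun x θ _ => hasDerivAt_interpolant hε hG hG' hGε x θ)

variable {V : ι → Type*} [∀ i, NormedAddCommGroup (V i)] [∀ i, InnerProductSpace ℝ (V i)]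
  [∀ i, FiniteDimensional ℝ (V i)] {B : ∀ i, E →L[ℝ] V i}

namespace IsGeometric

lemma interpolantDeriv_le (h : IsGeometric c B) (hε : 0 < ε) (hG : ∀ i, BoundedC1 (G i))
    (hG' : ∀ i, BoundedC1 (fderiv ℝ (G i))) (hGε : ∀ i x, ε ≤ G i x)
    (hinv : ∀ i x v, fderiv ℝ (G i) x ((B i).adjoint (B i v)) = fderiv ℝ (G i) x v) {θ : ℝ}
    (hsin : 0 ≤ Real.sin θ) (hcos : 0 ≤ Real.cos θ) (x : E) :
    interpolantDeriv c G θ x ≤ Real.cos θ * (fderiv ℝ (interpolant c G θ) (Real.sin θ • x) x -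
      Real.sin θ * bilinTrace E (fderiv ℝ (fderiv ℝ (interpolant c G θ)) (Real.sin θ • x))) := by
  refine mul_le_mul_of_nonneg_left (sub_le_sub_left (mul_le_mul_of_nonneg_left ?_ hsin) _) hcos
  refine h.bilinTrace_fderiv_fderiv_prod_rpow_le
    (fun i y => ((hG i).hasFDerivAt_gaussianAverage _ y).differentiableAt) (fun i y => ?_)
    (fun i y => hε.trans_le ((hG i).le_gaussianAverage (hGε i) _ y)) (fun i y v => ?_) _
  · rw [(hG i).fderiv_gaussianAverage]
    exact ((hG' i).hasFDerivAt_gaussianAverage _ y).differentiableAt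
  · simp only [(hG i).fderiv_gaussianAverage_apply, hinv]

lemma integral_interpolantDeriv_nonpos (h : IsGeometric c B) (hε : 0 < ε)
    (hG : ∀ i, BoundedC1 (G i)) (hG' : ∀ i, BoundedC1 (fderiv ℝ (G i)))
    (hGε : ∀ i x, ε ≤ G i x)
    (hinv : ∀ i x v, fderiv ℝ (G i) x ((B i).adjoint (B i v)) = fderiv ℝ (G i) x v) {θ : ℝ}
    (hsin : 0 ≤ Real.sin θ) (hcos : 0 ≤ Real.cos θ) :
    ∫ x, interpolantDeriv c G θ x ∂stdGaussian E ≤ 0 := by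
  have hΦ := BoundedC1.interpolant c hε hG hGε θ
  have hΦ' := BoundedC1.fderiv_interpolant c hε hG hG' hGε θ
  have hint : Integrable (fun x => fderiv ℝ (interpolant c G θ) (Real.sin θ • x) x)
      (stdGaussian E) := by
    simpa using hΦ.integrable_fderiv_apply_affine 0 (Real.sin θ)
  have hint' := (bilinTrace E).integrable_comp
    (hΦ'.integrable_fderiv_comp (continuous_const_smul (Real.sin θ)) (stdGaussian E))
  have hstein := hΦ'.integral_apply_self_affine 0 (Real.sin θ)
  simp only [zero_add] at hstein
  calc ∫ x, interpolantDeriv c G θ x ∂stdGaussian E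
      ≤ ∫ x, Real.cos θ * (fderiv ℝ (interpolant c G θ) (Real.sin θ • x) x - Real.sin θ *
          bilinTrace E (fderiv ℝ (fderiv ℝ (interpolant c G θ)) (Real.sin θ • x)))
          ∂stdGaussian E :=
        integral_mono (hasDerivAt_integral_interpolant h.nonneg hε hG hG' hGε θ).1
          ((hint.sub (hint'.const_mul _)).const_mul _)
          (h.interpolantDeriv_le hε hG hG' hGε hinv hsin hcos)
    _ = 0 := by
      rw [integral_const_mul, integral_sub hint (hint'.const_mul _), integral_const_mul, hstein,
        sub_self, mul_zero]

lemma integral_prod_rpow_le_of_fderiv_invariant (h : IsGeometric c B) (hε : 0 < ε)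
    (hG : ∀ i, BoundedC1 (G i)) (hG' : ∀ i, BoundedC1 (fderiv ℝ (G i)))
    (hGε : ∀ i x, ε ≤ G i x)
    (hinv : ∀ i x v, fderiv ℝ (G i) x ((B i).adjoint (B i v)) = fderiv ℝ (G i) x v) :
    ∫ x, ∏ i, G i x ^ c i ∂stdGaussian E ≤ ∏ i, (∫ x, G i x ∂stdGaussian E) ^ c i := by
  have hderiv := fun θ => (hasDerivAt_integral_interpolant h.nonneg hε hG hG' hGε θ).2
  have hanti : AntitoneOn (fun θ => ∫ x, interpolant c G θ (Real.sin θ • x) ∂stdGaussian E)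
      (Set.Icc 0 (Real.pi / 2)) := by
    refine antitoneOn_of_hasDerivWithinAt_nonpos (convex_Icc _ _)
      (fun θ _ => (hderiv θ).continuousAt.continuousWithinAt)
      (fun θ _ => (hderiv θ).hasDerivWithinAt) fun θ hθ => ?_
    rw [interior_Icc] at hθ
    exact h.integral_interpolantDeriv_nonpos hε hG hG' hGε hinv
      (Real.sin_nonneg_of_nonneg_of_le_pi hθ.1.le (by linarith [hθ.2, Real.pi_pos]))
      (Real.cos_nonneg_of_neg_pi_div_two_le_of_le (by linarith [hθ.1, Real.pi_pos]) hθ.2.le)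
  have hle := hanti (Set.left_mem_Icc.2 Real.pi_div_two_pos.le)
    (Set.right_mem_Icc.2 Real.pi_div_two_pos.le) Real.pi_div_two_pos.le
  simpa [interpolant, gaussianAverage] using hle

end IsGeometric

end Monotonicity

section Approximation

open scoped ContDiff

lemma integrable_and_integral_le_of_tendsto {α : Type*} [MeasurableSpace α] {μ : Measure α}
    {F : ℕ → α → ℝ} {f : α → ℝ} {R : ℕ → ℝ} {r : ℝ} (hF : ∀ k, Integrable (F k) μ)
    (hF0 : ∀ k x, 0 ≤ F k x) (hlim : ∀ᵐ x ∂μ, Tendsto (fun k => F k x) atTop (𝓝 (f x)))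
    (hle : ∀ k, ∫ x, F k x ∂μ ≤ R k) (hR : Tendsto R atTop (𝓝 r)) :
    Integrable f μ ∧ ∫ x, f x ∂μ ≤ r := by
  have hr : 0 ≤ r := ge_of_tendsto' hR fun k => (integral_nonneg (hF0 k)).trans (hle k)
  have hmeas : AEStronglyMeasurable f μ :=
    aestronglyMeasurable_of_tendsto_ae atTop (fun k => (hF k).aestronglyMeasurable) hlim
  have hf0 : 0 ≤ᵐ[μ] f := hlim.mono fun x hx => ge_of_tendsto' hx (hF0 · x)
  have hfatou : ∫⁻ x, ENNReal.ofReal (f x) ∂μ ≤ ENNReal.ofReal r :=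
    calc ∫⁻ x, ENNReal.ofReal (f x) ∂μ
        = ∫⁻ x, liminf (fun k => ENNReal.ofReal (F k x)) atTop ∂μ :=
          lintegral_congr_ae (hlim.mono fun x hx => (ENNReal.tendsto_ofReal hx).liminf_eq.symm)
      _ ≤ liminf (fun k => ∫⁻ x, ENNReal.ofReal (F k x) ∂μ) atTop :=
          lintegral_liminf_le' fun k => (hF k).aemeasurable.ennreal_ofReal
      _ ≤ liminf (fun k => ENNReal.ofReal (R k)) atTop := by
          refine liminf_le_liminf (.of_forall fun k => ?_)
          rw [← ofReal_integral_eq_lintegral_ofReal (hF k) (.of_forall (hF0 k))]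
          exact ENNReal.ofReal_le_ofReal (hle k)
      _ = ENNReal.ofReal r := (ENNReal.tendsto_ofReal hR).liminf_eq
  refine ⟨⟨hmeas, (hasFiniteIntegral_iff_ofReal hf0).2 (hfatou.trans_lt ENNReal.ofReal_lt_top)⟩, ?_⟩
  rw [integral_eq_lintegral_of_nonneg_ae hf0 hmeas]
  exact ENNReal.toReal_le_of_le_ofReal hr hfatou

lemma exists_seq_contDiff_sq_tendsto {V : Type*} [NormedAddCommGroup V] [NormedSpace ℝ V]
    [FiniteDimensional ℝ V] [MeasurableSpace V] [BorelSpace V] {μ : Measure V}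
    [IsFiniteMeasureOnCompacts μ] {f : V → ℝ} (hf : Integrable f μ) (hf0 : ∀ x, 0 ≤ f x) :
    ∃ s : ℕ → V → ℝ, (∀ k, HasCompactSupport (s k)) ∧ (∀ k, ContDiff ℝ ∞ (s k)) ∧
      (∀ᵐ x ∂μ, Tendsto (fun k => s k x ^ 2) atTop (𝓝 (f x))) ∧
      Tendsto (fun k => ∫ x, s k x ^ 2 ∂μ) atTop (𝓝 (∫ x, f x ∂μ)) := by
  have hsqrt : MemLp (fun x => √(f x)) 2 μ := by
    rw [memLp_two_iff_integrable_sq (Real.continuous_sqrt.comp_aestronglyMeasurable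
      hf.aestronglyMeasurable)]
    simpa only [Real.sq_sqrt (hf0 _)] using hf
  obtain ⟨u, hu, hlim⟩ := mem_closure_iff_seq_limit.1
    (Lp.dense_hasCompactSupport_contDiff (μ := μ) (p := 2) ENNReal.ofNat_ne_top (hsqrt.toLp _))
  obtain ⟨n, hn, hae⟩ := (tendstoInMeasure_of_tendsto_Lp hlim).exists_seq_tendsto_ae
  choose s hus hsupp hs using hu
  have hnorm (v : Lp ℝ 2 μ) : ‖v‖ ^ 2 = ∫ x, v x ^ 2 ∂μ := by
    rw [← real_inner_self_eq_norm_sq, L2.inner_def]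
    simp only [real_inner_self_eq_norm_sq, Real.norm_eq_abs, sq_abs]
  refine ⟨fun k => s (n k), fun k => hsupp _, fun k => hs _, ?_, ?_⟩
  · filter_upwards [hae, hsqrt.coeFn_toLp, ae_all_iff.2 hus] with x hx hfx hsx
    simpa only [hsx, hfx, Real.sq_sqrt (hf0 x)] using hx.pow 2
  · have hsq := (hlim.comp hn.tendsto_atTop).norm.pow 2
    simp only [Function.comp_def, hnorm] at hsq
    have h1 : ∫ x, hsqrt.toLp _ x ^ 2 ∂μ = ∫ x, f x ∂μ := integral_congr_ae <| by
      filter_upwards [hsqrt.coeFn_toLp] with x hx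
      rw [hx, Real.sq_sqrt (hf0 x)]
    have h2 (k : ℕ) : ∫ x, u k x ^ 2 ∂μ = ∫ x, s k x ^ 2 ∂μ := integral_congr_ae <| by
      filter_upwards [hus k] with x hx
      rw [hx]
    simpa only [h1, h2] using hsq

end Approximation

section GeometricInequality

variable {ι E : Type*} [Fintype ι] [NormedAddCommGroup E] [InnerProductSpace ℝ E]
  [FiniteDimensional ℝ E] {V : ι → Type*} [∀ i, NormedAddCommGroup (V i)]
  [∀ i, InnerProductSpace ℝ (V i)] [∀ i, FiniteDimensional ℝ (V i)] {c : ι → ℝ}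
  {B : ∀ i, E →L[ℝ] V i}

namespace IsGeometric

lemma prod_gaussianDensity_rpow (h : IsGeometric c B) (x : E) :
    ∏ i, gaussianDensity (B i x) ^ c i = gaussianDensity x := by
  have hpi := Real.two_pi_pos
  simp only [gaussianDensity, Real.mul_rpow (Real.rpow_nonneg hpi.le _) (Real.exp_pos _).le,
    ← Real.rpow_mul hpi.le, ← Real.exp_mul, Finset.prod_mul_distrib, ← Real.exp_sum,
    ← Real.rpow_sum_of_pos hpi]
  rw [← h.sum_norm_sq, ← h.sum_finrank]
  simp only [neg_mul, neg_div, Finset.sum_neg_distrib, Finset.sum_div, mul_comm (c _),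
    mul_div_right_comm]

variable [MeasurableSpace E] [BorelSpace E] [∀ i, MeasurableSpace (V i)] [∀ i, BorelSpace (V i)]

lemma integrable_and_integral_stdGaussian_le_of_boundedC1 (h : IsGeometric c B) {ε : ℝ} (hε : 0 < ε)
    {g : ∀ i, V i → ℝ} (hg : ∀ i, BoundedC1 (g i)) (hg' : ∀ i, BoundedC1 (fderiv ℝ (g i)))
    (hgε : ∀ i y, ε ≤ g i y) :
    Integrable (fun x => ∏ i, g i (B i x) ^ c i) (stdGaussian E) ∧
      ∫ x, ∏ i, g i (B i x) ^ c i ∂stdGaussian E ≤ ∏ i, (∫ y, g i y ∂stdGaussian (V i)) ^ c i := by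
  have hG (i : ι) : BoundedC1 fun x => g i (B i x) := (hg i).comp_clm (B i)
  have hG' (i : ι) : BoundedC1 (fderiv ℝ fun x => g i (B i x)) := by
    rw [funext ((hg i).fderiv_comp_clm (B i))]
    exact ((hg' i).comp_clm (B i)).contDiff_comp
      (((ContinuousLinearMap.compL ℝ E (V i) ℝ).flip (B i)).contDiff)
  have hint (i : ι) : ∫ x, g i (B i x) ∂stdGaussian E = ∫ y, g i y ∂stdGaussian (V i) := by
    have hB := measurePreserving_stdGaussian_of_comp_adjoint_eq_id (h.comp_adjoint i)
    rw [← hB.map_eq, integral_map hB.measurable.aemeasurable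
      (hg i).continuous.aestronglyMeasurable]
  refine ⟨(BoundedC1.prod_rpow c hε hG fun i x => hgε i _).integrable _, ?_⟩
  simp only [← hint]
  refine h.integral_prod_rpow_le_of_fderiv_invariant hε hG hG' (fun i x => hgε i _)
    fun i x v => ?_
  simp only [(hg i).fderiv_comp_clm, ContinuousLinearMap.comp_apply, h.apply_adjoint]

theorem integrable_and_integral_stdGaussian_le (h : IsGeometric c B) {f : ∀ i, V i → ℝ}
    (hf : ∀ i, Integrable (f i) (stdGaussian (V i))) (hf0 : ∀ i y, 0 ≤ f i y) :
    Integrable (fun x => ∏ i, f i (B i x) ^ c i) (stdGaussian E) ∧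
      ∫ x, ∏ i, f i (B i x) ^ c i ∂stdGaussian E ≤ ∏ i, (∫ y, f i y ∂stdGaussian (V i)) ^ c i := by
  choose s hsupp hs hae hlim using fun i => exists_seq_contDiff_sq_tendsto (hf i) (hf0 i)
  have hsq (i : ι) (k : ℕ) : BoundedC1 fun y => s i k y ^ 2 :=
    (BoundedC1.of_hasCompactSupport ((hs i k).of_le (mod_cast le_top)) (hsupp i k)).contDiff_comp
      (contDiff_id.pow 2)
  have hsq' (i : ι) (k : ℕ) : BoundedC1 (fderiv ℝ fun y => s i k y ^ 2) :=
    .of_hasCompactSupport (((contDiff_infty.1 (hs i k) 2).pow 2).fderiv_right (by norm_num))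
      (((hsupp i k).comp_left (g := (· ^ 2)) (by simp)).fderiv ℝ)
  have hshift (i : ι) (k : ℕ) : BoundedC1 fun y => s i k y ^ 2 + 1 / ((k : ℝ) + 1) :=
    (hsq i k).contDiff_comp (h := fun t => t + 1 / ((k : ℝ) + 1)) (by fun_prop)
  have hshift' (i : ι) (k : ℕ) :
      BoundedC1 (fderiv ℝ fun y => s i k y ^ 2 + 1 / ((k : ℝ) + 1)) := by
    have heq : fderiv ℝ (fun y => s i k y ^ 2 + 1 / ((k : ℝ) + 1)) =
        fderiv ℝ fun y => s i k y ^ 2 := funext fun y => fderiv_add_const _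
    exact heq ▸ hsq' i k
  have hk (k : ℕ) := h.integrable_and_integral_stdGaussian_le_of_boundedC1
    (Nat.one_div_pos_of_nat (n := k)) (fun i => hshift i k) (fun i => hshift' i k)
    fun i y => le_add_of_nonneg_left (sq_nonneg (s i k y))
  have hzero : Tendsto (fun k : ℕ => 1 / ((k : ℝ) + 1)) atTop (𝓝 0) :=
    tendsto_one_div_add_atTop_nhds_zero_nat
  refine integrable_and_integral_le_of_tendsto (fun k => (hk k).1) (fun k x => ?_) ?_
    (fun k => (hk k).2) ?_
  · exact Finset.prod_nonneg fun i _ => by positivity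
  · have hpull (i : ι) :=
      (measurePreserving_stdGaussian_of_comp_adjoint_eq_id
        (h.comp_adjoint i)).quasiMeasurePreserving.ae (hae i)
    filter_upwards [ae_all_iff.2 hpull] with x hx
    refine tendsto_finsetProd _ fun i _ => .rpow_const ?_ (.inr (h.nonneg i))
    simpa using (hx i).add hzero
  · refine tendsto_finsetProd _ fun i _ => .rpow_const ?_ (.inr (h.nonneg i))
    simpa [integral_add ((hsq i _).integrable _)] using (hlim i).add hzero

theorem integrable_and_integral_le (h : IsGeometric c B) {f : ∀ i, V i → ℝ}
    (hf : ∀ i, Integrable (f i)) (hf0 : ∀ i y, 0 ≤ f i y) :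
    Integrable (fun x => ∏ i, f i (B i x) ^ c i) ∧
      ∫ x, ∏ i, f i (B i x) ^ c i ≤ ∏ i, (∫ y, f i y) ^ c i := by
  have hcancel (i : ι) (y : V i) : gaussianDensity y * ((gaussianDensity y)⁻¹ * f i y) = f i y :=
    mul_inv_cancel_left₀ (gaussianDensity_pos y).ne' _
  have hprod (x : E) : gaussianDensity x * ∏ i, ((gaussianDensity (B i x))⁻¹ * f i (B i x)) ^ c i =
      ∏ i, f i (B i x) ^ c i := by
    rw [← h.prod_gaussianDensity_rpow, ← Finset.prod_mul_distrib]
    refine Finset.prod_congr rfl fun i _ => ?_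
    have hρ := gaussianDensity_pos (B i x)
    rw [← Real.mul_rpow hρ.le (mul_nonneg (inv_nonneg.2 hρ.le) (hf0 i _)), hcancel]
  have hgauss := h.integrable_and_integral_stdGaussian_le
    (f := fun i y => (gaussianDensity y)⁻¹ * f i y)
    (fun i => integrable_stdGaussian_iff.2 (by simpa only [smul_eq_mul, hcancel] using hf i))
    fun i y => mul_nonneg (inv_nonneg.2 (gaussianDensity_pos y).le) (hf0 i y)
  simpa only [integrable_stdGaussian_iff, integral_stdGaussian, smul_eq_mul, hcancel, hprod]
    using hgauss

end IsGeometric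

end GeometricInequality

section Factorization

lemma posDef_mul_mul_transpose {κ ν : Type*} [Finite κ] [Fintype ν] {A : Matrix ν ν ℝ}
    (hA : A.PosDef) {B : Matrix κ ν ℝ} (hB : Function.Surjective B.mulVec) :
    (B * A * Bᵀ).PosDef := by
  classical
  have := Fintype.ofFinite κ
  obtain ⟨C, hC⟩ := mulVec_surjective_iff_exists_right_inverse.1 hB
  have hinj : Function.Injective B.vecMul :=
    Function.LeftInverse.injective (g := C.vecMul) fun v =>
      (vecMul_vecMul v B C).trans (by rw [hC, vecMul_one])
  simpa only [conjTranspose_eq_transpose_of_trivial] using hA.mul_mul_conjTranspose_same hinj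

variable {κ ν : Type*} [Fintype κ] [DecidableEq κ] [Fintype ν]

lemma inv_mul_mul_mul_transpose_eq_one {A S : Matrix ν ν ℝ} {B : Matrix κ ν ℝ}
    {Q : Matrix κ κ ℝ} (hS : S * Sᵀ = A) (hQ : IsUnit Q.det) (hQA : Q * Qᵀ = B * A * Bᵀ) :
    (Q⁻¹ * B * S) * (Q⁻¹ * B * S)ᵀ = 1 := by
  calc (Q⁻¹ * B * S) * (Q⁻¹ * B * S)ᵀ = Q⁻¹ * (B * (S * Sᵀ) * Bᵀ) * (Q⁻¹)ᵀ := by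
        simp only [transpose_mul, Matrix.mul_assoc]
    _ = (Q⁻¹ * Q) * (Q⁻¹ * Q)ᵀ := by
        rw [hS, ← hQA, transpose_mul]
        simp only [Matrix.mul_assoc]
    _ = 1 := by rw [nonsing_inv_mul _ hQ, transpose_one, Matrix.one_mul]

lemma transpose_mul_inv_mul_mul (S : Matrix ν ν ℝ) (B : Matrix κ ν ℝ) (Q : Matrix κ κ ℝ) :
    (Q⁻¹ * B * S)ᵀ * (Q⁻¹ * B * S) = Sᵀ * (Bᵀ * (Q * Qᵀ)⁻¹ * B) * S := by
  rw [Matrix.mul_inv_rev, ← transpose_nonsing_inv]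
  simp only [transpose_mul, Matrix.mul_assoc]

variable [DecidableEq ν]

open scoped MatrixOrder Matrix.Norms.L2Operator in
lemma exists_mul_transpose_eq_of_posDef {M : Matrix ν ν ℝ} (hM : M.PosDef) :
    ∃ S : Matrix ν ν ℝ, IsUnit S.det ∧ S * Sᵀ = M := by
  obtain ⟨C, hC, rfl⟩ := CStarAlgebra.isStrictlyPositive_iff_eq_star_mul_self.1
    hM.isStrictlyPositive
  exact ⟨Cᵀ, by rwa [det_transpose, ← isUnit_iff_isUnit_det],
    by rw [transpose_transpose, star_eq_conjTranspose, conjTranspose_eq_transpose_of_trivial]⟩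

lemma transpose_mul_mul_transpose_inv_mul {S : Matrix ν ν ℝ} (hS : IsUnit S.det) :
    Sᵀ * (S * Sᵀ)⁻¹ * S = 1 := by
  rw [Matrix.mul_inv_rev, ← Matrix.mul_assoc, mul_nonsing_inv _ (by rwa [det_transpose]),
    Matrix.one_mul, nonsing_inv_mul _ hS]

lemma det_mul_transpose_eq_abs_det_sq (S : Matrix ν ν ℝ) : (S * Sᵀ).det = |S.det| ^ 2 := by
  rw [det_mul, det_transpose, sq_abs, sq]

end Factorization

section ChangeOfVariables

variable {ν : Type*} [Fintype ν] [DecidableEq ν] {S : Matrix ν ν ℝ}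

lemma measurableEmbedding_mulVec (hS : IsUnit S.det) : MeasurableEmbedding S.mulVec :=
  (Continuous.matrix_mulVec continuous_const continuous_id).measurableEmbedding
    (mulVec_injective_iff_isUnit.2 ((isUnit_iff_isUnit_det S).2 hS))

lemma map_mulVec_volume (hS : IsUnit S.det) :
    Measure.map S.mulVec volume = ENNReal.ofReal |S.det|⁻¹ • volume := by
  rw [← abs_inv]
  exact Real.map_matrix_volume_pi_eq_smul_volume_pi hS.ne_zero

lemma integrable_comp_mulVec_iff (hS : IsUnit S.det) {f : (ν → ℝ) → ℝ} :
    Integrable (fun x => f (S *ᵥ x)) ↔ Integrable f := by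
  have hdet : 0 < |S.det|⁻¹ := inv_pos.2 (abs_pos.2 hS.ne_zero)
  rw [← integrable_smul_measure (f := f) (ENNReal.ofReal_pos.2 hdet).ne' ENNReal.ofReal_ne_top,
    ← map_mulVec_volume hS, (measurableEmbedding_mulVec hS).integrable_map_iff]
  rfl

lemma integral_comp_mulVec (hS : IsUnit S.det) (f : (ν → ℝ) → ℝ) :
    ∫ x, f (S *ᵥ x) = |S.det|⁻¹ * ∫ x, f x := by
  rw [← (measurableEmbedding_mulVec hS).integral_map, map_mulVec_volume hS, integral_smul_measure,
    ENNReal.toReal_ofReal (inv_nonneg.2 (abs_nonneg _)), smul_eq_mul]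

end ChangeOfVariables

section Bound

variable {ι ν : Type*} [Fintype ι] [Fintype ν] {κ : ι → Type*} [∀ i, Fintype (κ i)]
  {c : ι → ℝ} {B B' : ∀ i, Matrix (κ i) ν ℝ} {K : ℝ}

/-- `K` is an admissible constant in the Brascamp–Lieb inequality for the datum `(c, B)`. The
integrability clause keeps the bound from holding through the junk value of the integral. -/
def IsBrascampLiebConstant (c : ι → ℝ) (B : ∀ i, Matrix (κ i) ν ℝ) (K : ℝ) : Prop :=
  ∀ f : ∀ i, (κ i → ℝ) → ℝ, (∀ i, Integrable (f i)) → (∀ i y, 0 ≤ f i y) →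
    Integrable (fun x => ∏ i, f i (B i *ᵥ x) ^ c i) ∧
      ∫ x, ∏ i, f i (B i *ᵥ x) ^ c i ≤ K * ∏ i, (∫ y, f i y) ^ c i

variable [DecidableEq ν] [∀ i, DecidableEq (κ i)]

lemma isGeometric_toEuclideanLin (hc : ∀ i, 0 ≤ c i) (hB : ∀ i, B i * (B i)ᵀ = 1)
    (hsum : ∑ i, c i • ((B i)ᵀ * B i) = 1) :
    IsGeometric c fun i => (toEuclideanLin (B i)).toContinuousLinearMap := by
  have hadj (i : ι) : (toEuclideanLin (B i)).toContinuousLinearMap.adjoint =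
      (toEuclideanLin (B i)ᵀ).toContinuousLinearMap := by
    rw [← conjTranspose_eq_transpose_of_trivial, toEuclideanLin_conjTranspose_eq_adjoint]
    rfl
  refine ⟨hc, fun i => ContinuousLinearMap.ext fun y => ?_, ContinuousLinearMap.ext fun x => ?_⟩
  · rw [hadj]
    simp [toLpLin_apply, hB]
  · simp only [hadj]
    have := congrArg (fun M => WithLp.toLp 2 (M *ᵥ x.ofLp)) hsum
    simpa [toLpLin_apply, sum_mulVec, smul_mulVec] using this

lemma isBrascampLiebConstant_one (hc : ∀ i, 0 ≤ c i) (hB : ∀ i, B i * (B i)ᵀ = 1)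
    (hsum : ∑ i, c i • ((B i)ᵀ * B i) = 1) : IsBrascampLiebConstant c B 1 := by
  intro f hf hf0
  have hκ (i : ι) := PiLp.volume_preserving_ofLp (κ i)
  have hembκ (i : ι) := (MeasurableEquiv.toLp 2 (κ i → ℝ)).symm.measurableEmbedding
  have hν := PiLp.volume_preserving_ofLp ν
  have hembν := (MeasurableEquiv.toLp 2 (ν → ℝ)).symm.measurableEmbedding
  have hle := (isGeometric_toEuclideanLin hc hB hsum).integrable_and_integral_le
    (f := fun i y => f i y.ofLp) (fun i => (hκ i).integrable_comp_of_integrable (hf i))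
    fun i y => hf0 i _
  rw [one_mul, ← hν.integrable_comp_emb hembν, ← hν.integral_comp hembν]
  simp only [fun i => (hκ i).integral_comp (hembκ i) (f i)] at hle
  exact hle

lemma IsBrascampLiebConstant.of_mul_eq_mul (h : IsBrascampLiebConstant c B' K)
    {S : Matrix ν ν ℝ} (hS : IsUnit S.det) {Q : ∀ i, Matrix (κ i) (κ i) ℝ}
    (hQ : ∀ i, IsUnit (Q i).det) (hQB : ∀ i, Q i * B' i = B i * S) :
    IsBrascampLiebConstant c B (|S.det| / (∏ i, |(Q i).det| ^ c i) * K) := by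
  intro f hf hf0
  have hle := h (fun i y => f i (Q i *ᵥ y)) (fun i => (integrable_comp_mulVec_iff (hQ i)).2 (hf i))
    fun i y => hf0 i _
  simp only [mulVec_mulVec, hQB, integral_comp_mulVec (hQ _)] at hle
  simp only [← mulVec_mulVec] at hle
  rw [integrable_comp_mulVec_iff hS (f := fun x => ∏ i, f i (B i *ᵥ x) ^ c i),
    integral_comp_mulVec hS fun x => ∏ i, f i (B i *ᵥ x) ^ c i,
    inv_mul_le_iff₀ (abs_pos.2 hS.ne_zero)] at hle
  refine ⟨hle.1, hle.2.trans_eq ?_⟩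
  have hprod : ∏ i, (|(Q i).det|⁻¹ * ∫ y, f i y) ^ c i =
      (∏ i, |(Q i).det| ^ c i)⁻¹ * ∏ i, (∫ y, f i y) ^ c i := by
    rw [← Finset.prod_inv_distrib, ← Finset.prod_mul_distrib]
    refine Finset.prod_congr rfl fun i _ => ?_
    rw [Real.mul_rpow (inv_nonneg.2 (abs_nonneg _)) (integral_nonneg (hf0 i)),
      Real.inv_rpow (abs_nonneg _)]
  rw [hprod]
  ring

lemma sqrt_det_div_prod_det_rpow (c : ι → ℝ) (S : Matrix ν ν ℝ) (Q : ∀ i, Matrix (κ i) (κ i) ℝ) :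
    √((S * Sᵀ).det / ∏ i, (Q i * (Q i)ᵀ).det ^ c i) = |S.det| / ∏ i, |(Q i).det| ^ c i := by
  have hQ (i : ι) : (Q i * (Q i)ᵀ).det ^ c i = (|(Q i).det| ^ c i) ^ 2 := by
    rw [det_mul_transpose_eq_abs_det_sq, Real.rpow_pow_comm (abs_nonneg _)]
  simp only [hQ]
  rw [det_mul_transpose_eq_abs_det_sq, Finset.prod_pow, ← div_pow]
  exact Real.sqrt_sq (div_nonneg (abs_nonneg _)
    (Finset.prod_nonneg fun i _ => Real.rpow_nonneg (abs_nonneg _) _))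

end Bound

end BrascampLieb

open BrascampLieb in
theorem brascamp_lieb_inequality_general {ι ν : Type*} [Fintype ι] [Fintype ν] [DecidableEq ν]
    {κ : ι → Type*} [∀ i, Fintype (κ i)] [∀ i, DecidableEq (κ i)]
    {c : ι → ℝ} (hc : ∀ i, 0 ≤ c i) {B : ∀ i, Matrix (κ i) ν ℝ}
    (hB : ∀ i, Function.Surjective (B i).mulVec) {A : Matrix ν ν ℝ} (hA : A.PosDef)
    (hjohn : A⁻¹ = ∑ i, c i • ((B i)ᵀ * (B i * A * (B i)ᵀ)⁻¹ * B i)) :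
    IsBrascampLiebConstant c B √(A.det / ∏ i, (B i * A * (B i)ᵀ).det ^ c i) := by
  obtain ⟨S, hS, hSA⟩ := exists_mul_transpose_eq_of_posDef hA
  choose Q hQ hQA using fun i =>
    exists_mul_transpose_eq_of_posDef (posDef_mul_mul_transpose hA (hB i))
  have hsum : ∑ i, c i • (((Q i)⁻¹ * B i * S)ᵀ * ((Q i)⁻¹ * B i * S)) = 1 := by
    calc ∑ i, c i • (((Q i)⁻¹ * B i * S)ᵀ * ((Q i)⁻¹ * B i * S)) = Sᵀ * A⁻¹ * S := by
          simp only [transpose_mul_inv_mul_mul, hQA, hjohn, Matrix.mul_sum, Matrix.sum_mul,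
            Matrix.mul_smul, Matrix.smul_mul]
      _ = 1 := by rw [← hSA, transpose_mul_mul_transpose_inv_mul hS]
  have hgeom : IsBrascampLiebConstant c (fun i => (Q i)⁻¹ * B i * S) 1 :=
    isBrascampLiebConstant_one hc
      (fun i => inv_mul_mul_mul_transpose_eq_one hSA (hQ i) (hQA i)) hsum
  have hbound := hgeom.of_mul_eq_mul (B := B) hS hQ fun i => by
    rw [Matrix.mul_assoc, mul_nonsing_inv_cancel_left _ _ (hQ i)]
  simpa only [mul_one, ← sqrt_det_div_prod_det_rpow, hSA, hQA] using hbound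

/-- **Brascamp–Lieb inequality** (Theorem 2 of the paper).
Given a Brascamp–Lieb datum `(cᵢ, Bᵢ)` on `ℝⁿ` with `∑ cᵢ nᵢ = n`, if there is a
positive definite matrix `A` with `A⁻¹ = ∑ cᵢ Bᵢ* (Bᵢ A Bᵢ*)⁻¹ Bᵢ`, then the
Brascamp–Lieb inequality holds with constant
`C = (det A / ∏ det (Bᵢ A Bᵢ*)^{cᵢ})^{1/2}`. -/
theorem brascamp_lieb_inequality
    (m n : ℕ) (ni : Fin m → ℕ) (c : Fin m → ℝ) (hc : ∀ i, 0 < c i)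
    (B : ∀ i, Matrix (Fin (ni i)) (Fin n) ℝ)
    (hB : ∀ i, Function.Surjective (B i).mulVec)
    (hdim : ∑ i, c i * (ni i : ℝ) = (n : ℝ))
    (A : Matrix (Fin n) (Fin n) ℝ) (hA : A.PosDef)
    (hjohn : A⁻¹ = ∑ i, c i • ((B i)ᵀ * (B i * A * (B i)ᵀ)⁻¹ * B i))
    (f : ∀ i, (Fin (ni i) → ℝ) → ℝ)
    (hf0 : ∀ i x, 0 ≤ f i x) (hfint : ∀ i, Integrable (f i)) :
    ∫ x : Fin n → ℝ, ∏ i, (f i ((B i).mulVec x)) ^ (c i) ≤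
      Real.sqrt (A.det / ∏ i, ((B i * A * (B i)ᵀ).det) ^ (c i)) *
        ∏ i, (∫ y : Fin (ni i) → ℝ, f i y) ^ (c i) :=
  (brascamp_lieb_inequality_general (fun i => (hc i).le) hB hA hjohn f hfint hf0).2
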